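/- Let q = 2, m = 2r with r ≥ 3, and n = 2^{r−1}(2^r − 1). Then the augmented code \overline{C_D} has length n, dimension m + 1 and minimum distance 2^{r−1}(2^{r−1} − 1), and its weight enumerator is 1 + (2^{2r} − 1) z^{2^{r−1}(2^{r−1}−1)} + (2^{2r} − 1) z^{2^{2r−2}} + z^{2^{r−1}(2^r−1)}; the dual code \overline{C_D}^⊥ has length n, dimension n − m − 1 and minimum distance 4. Moreover, the supports of the codewords of weight 2^{r−1}(2^{r−1} − 1) in \overline{C_D} form a 2-(n, 2^{r−1}(2^{r−1} − 1), 2^{2r−2} − 2^{r−1} − 1) design, and the supports of the codewords of weight 4 in \overline{C_D}^⊥ form a 2-(n, 4, 2^{2r−3} − 2^{r−2} − 1) design. -/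

import Mathlib

open scoped Classical

noncomputable section

/-- The augmented code `\overline{C_D}` of the defining set `D = {x : K // P x}`:
codewords are `(Tr_{K/F}(b d) + c)_{d ∈ D}` for `b ∈ K`, `c ∈ F`. -/
def augCode (F K : Type*) [Field F] [Field K] [Algebra F K] (P : K → Prop) :
    Set ({x : K // P x} → F) :=
  {w | ∃ b : K, ∃ c : F, ∀ d : {x : K // P x}, w d = Algebra.trace F K (b * d.1) + c}

/-- The dual code under the standard inner product. -/
def dualCode {ι F : Type*} [Fintype ι] [CommRing F] (C : Set (ι → F)) : Set (ι → F) :=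
  {u | ∀ v ∈ C, ∑ i, u i * v i = 0}

/-- `d` is the minimum distance of the code `C`: the smallest Hamming weight of a
nonzero codeword. -/
def IsMinDist {ι F : Type*} [Fintype ι] [CommRing F] (C : Set (ι → F)) (d : ℕ) : Prop :=
  (∃ c ∈ C, c ≠ 0 ∧ hammingNorm c = d) ∧ ∀ c ∈ C, c ≠ 0 → d ≤ hammingNorm c

/-- The supports of the codewords of `C` of Hamming weight `κ` form a
`2-(n, κ, lam)` design: every pair of distinct coordinates lies in exactly `lam`
of these supports. -/
def Holds2Design {ι F : Type*} [Fintype ι] [CommRing F] (C : Set (ι → F))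
    (κ lam : ℕ) : Prop :=
  ∀ i j : ι, i ≠ j →
    Nat.card {S : Set ι //
      (∃ c ∈ C, hammingNorm c = κ ∧ S = {k | c k ≠ 0}) ∧ i ∈ S ∧ j ∈ S} = lam

/-!
The function `Q = Tr ∘ N`, with `N x = x ^ (2 ^ r + 1)` the norm of the quadratic extension, is a
nonsingular quadratic form over the field with two elements, and its exponential sum shows that it
has minus type. Its zero set is `D`, and the words of the augmented code are the restrictions to `D`
of the affine functions, since the trace form is nondegenerate.

As `Q` vanishes on `D` and its polar form is nondegenerate, the affine functions restricted to `D`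
are the words `d ↦ Q (d + a) + c`. Their weights follow from the two exponential sums of `Q` and of
its polar form. The minimum weight is attained exactly when `a ≠ 0` and `c = 1`, on the support
`D ∩ (D + a)`; a pair `i, j ∈ D` lies in that support exactly when `d = i + a ≠ i` satisfies
`d ∈ D ∩ (D + (i + j))`, so the number of supports through the pair does not depend on the pair.

The words of the dual code are the subsets of `D` of even size with sum zero. Two distinct points
never sum to zero, and the quadruples through `i` and `j` are counted by the points
`k ∈ D ∩ (D + (i + j))` different from `i` and `j`, the fourth point being `i + j + k`.
-/

section BinaryField

variable {F : Type*} [Field F] [Fintype F]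

lemma charP_two_of_card_eq_two (hF : Fintype.card F = 2) : CharP F 2 :=
  have : Fact (Nat.Prime 2) := ⟨Nat.prime_two⟩
  charP_of_card_eq_prime hF

lemma eq_zero_or_one_of_card_eq_two (hF : Fintype.card F = 2) (x : F) : x = 0 ∨ x = 1 :=
  IsIdempotentElem.iff_eq_zero_or_one.mp <| show x * x = x by
    simpa only [hF, sq] using FiniteField.pow_card x

lemma add_one_ne_zero_iff_of_card_eq_two (hF : Fintype.card F = 2) (x : F) :
    x + 1 ≠ 0 ↔ x = 0 := by
  have := charP_two_of_card_eq_two hF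
  rcases eq_zero_or_one_of_card_eq_two hF x with rfl | rfl <;> simp [CharTwo.add_self_eq_zero]

/-- The `ZMod 2`-module structure on a vector space over a field with two elements, which makes
the `ZModModule` lemmas of characteristic two available. -/
abbrev zmodTwoModule (hF : Fintype.card F = 2) (V : Type*) [AddCommGroup V] [Module F V] :
    Module (ZMod 2) V :=
  AddCommGroup.zmodModule fun x => by
    have := charP_two_of_card_eq_two hF
    rw [two_nsmul, ← two_smul F, CharTwo.two_eq_zero, zero_smul]

/-- The nontrivial additive character of a field with two elements, with values in `ℤ`. -/
def signChar (hF : Fintype.card F = 2) : AddChar F ℤ where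
  toFun x := if x = 0 then 1 else -1
  map_zero_eq_one' := if_pos rfl
  map_add_eq_mul' x y := by
    have := charP_two_of_card_eq_two hF
    rcases eq_zero_or_one_of_card_eq_two hF x with rfl | rfl <;>
      rcases eq_zero_or_one_of_card_eq_two hF y with rfl | rfl <;>
      simp [CharTwo.add_self_eq_zero]

lemma signChar_apply (hF : Fintype.card F = 2) (x : F) :
    signChar hF x = if x = 0 then 1 else -1 := rfl

lemma signChar_mul_self (hF : Fintype.card F = 2) (x : F) :
    signChar hF x * signChar hF x = 1 := by
  rw [signChar_apply]
  split_ifs <;> norm_num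

lemma sum_signChar_comp {ι : Type*} [Fintype ι] (hF : Fintype.card F = 2) (f : ι → F) :
    ∑ i, signChar hF (f i) = Fintype.card ι - 2 * (hammingNorm f : ℤ) := by
  have sign_eq (i : ι) : signChar hF (f i) = 1 - 2 * if f i ≠ 0 then 1 else 0 := by
    rw [signChar_apply]
    split_ifs <;> simp_all
  simp_rw [sign_eq, Finset.sum_sub_distrib, ← Finset.mul_sum, Finset.sum_boole]
  simp [hammingNorm]

lemma sum_signChar_linearMap {V : Type*} [AddCommGroup V] [Module F V] [Fintype V]
    (hF : Fintype.card F = 2) {f : V →ₗ[F] F} (hf : f ≠ 0) :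
    ∑ x, signChar hF (f x) = 0 := by
  let ψ : AddChar V ℤ := (signChar hF).compAddMonoidHom f.toAddMonoidHom
  refine AddChar.sum_eq_zero_of_ne_one (ψ := ψ) fun hψ => hf ?_
  ext x
  have hx : signChar hF (f x) = 1 := DFunLike.congr_fun hψ x
  by_contra hne
  simp [signChar_apply, show f x ≠ 0 from hne] at hx

end BinaryField

lemma card_zeros_add_hammingNorm {ι F : Type*} [Fintype ι] [Zero F] (f : ι → F) :
    Fintype.card {i // f i = 0} + hammingNorm f = Fintype.card ι := by
  rw [Fintype.card_subtype, hammingNorm]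
  exact Finset.card_filter_add_card_filter_not _

section BinaryWords

variable {F ι : Type*} [Field F] [Fintype F] [Fintype ι]

/-- Words over a field with two elements correspond to their supports. -/
def binarySupport (hF : Fintype.card F = 2) : (ι → F) ≃ Finset ι where
  toFun u := {k | u k ≠ 0}
  invFun S k := if k ∈ S then 1 else 0
  left_inv u := by
    funext k
    rcases eq_zero_or_one_of_card_eq_two hF (u k) with hk | hk <;> simp [hk]
  right_inv S := by ext k; simp

lemma mem_binarySupport (hF : Fintype.card F = 2) {u : ι → F} {k : ι} :
    k ∈ binarySupport hF u ↔ u k ≠ 0 := by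
  simp [binarySupport]

lemma card_binarySupport (hF : Fintype.card F = 2) (u : ι → F) :
    (binarySupport hF u).card = hammingNorm u := rfl

lemma holds2Design_iff_card_words (hF : Fintype.card F = 2) {C : Set (ι → F)} {κ lam : ℕ} :
    Holds2Design C κ lam ↔ ∀ i j : ι, i ≠ j →
      (Finset.univ.filter fun u : ι → F =>
        u ∈ C ∧ hammingNorm u = κ ∧ u i ≠ 0 ∧ u j ≠ 0).card = lam := by
  refine forall₃_congr fun i j _ => ?_
  have support_injective : Function.Injective fun u : ι → F => {k | u k ≠ 0} := fun u v huv =>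
    (binarySupport hF).injective <| by
      ext k; simpa [mem_binarySupport] using Set.ext_iff.mp huv k
  rw [← Finset.card_image_of_injective _ support_injective, ← Nat.subtype_card]
  rintro S
  simp only [Finset.mem_image, Finset.mem_filter, Finset.mem_univ, true_and]
  constructor
  · rintro ⟨u, ⟨hu, hκ, hi, hj⟩, rfl⟩
    exact ⟨⟨u, hu, hκ, rfl⟩, hi, hj⟩
  · rintro ⟨⟨u, hu, hκ, rfl⟩, hi, hj⟩
    exact ⟨u, ⟨hu, hκ, hi, hj⟩, rfl⟩

end BinaryWords

section DualCode

variable {F ι : Type*} [Field F] [Fintype F] [Fintype ι]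

lemma natCard_dualCode (C : Submodule F (ι → F)) :
    Nat.card (dualCode (C : Set (ι → F)))
      = Fintype.card F ^ (Fintype.card ι - Module.finrank F C) := by
  let β : LinearMap.BilinForm F (ι → F) := dotProductBilin F F
  have hβ : β.Nondegenerate :=
    ⟨fun _ hx => dotProduct_eq_zero_iff.mp hx, fun x hx => dotProduct_eq_zero_iff.mp fun w =>
      (dotProduct_comm x w).trans (hx w)⟩
  have dual_eq : dualCode (C : Set (ι → F)) = (β.orthogonal C : Set (ι → F)) := by
    ext u
    rw [SetLike.mem_coe, LinearMap.BilinForm.mem_orthogonal_iff]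
    exact forall₂_congr fun v _ => by
      change u ⬝ᵥ v = 0 ↔ v ⬝ᵥ u = 0
      rw [dotProduct_comm]
  rw [dual_eq, ← Module.finrank_fintype_fun_eq_card (R := F) (η := ι),
    ← LinearMap.BilinForm.finrank_orthogonal hβ, ← Nat.card_eq_fintype_card]
  exact Module.natCard_eq_pow_finrank

end DualCode

section AffineCode

variable {F V : Type*} [Field F] [AddCommGroup V] [Module F V]

variable (F) in
/-- The evaluations of the affine functions on `V` at the points satisfying `P`: the augmented code
of the defining set `P`, without reference to a field structure or a trace on `V`. -/
def affineCode (P : V → Prop) : Submodule F ({x // P x} → F) where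
  carrier := {w | ∃ f : Module.Dual F V, ∃ c : F, ∀ d, w d = f d.1 + c}
  add_mem' := by
    rintro w w' ⟨f, c, hw⟩ ⟨f', c', hw'⟩
    exact ⟨f + f', c + c', fun d => by simp only [Pi.add_apply, hw, hw', LinearMap.add_apply]; ring⟩
  zero_mem' := ⟨0, 0, by simp⟩
  smul_mem' := by
    rintro s w ⟨f, c, hw⟩
    exact ⟨s • f, s * c, fun d => by simp [hw, mul_add]⟩

lemma augCode_eq_affineCode {K : Type*} [Field K] [Algebra F K] [FiniteDimensional F K]
    [Algebra.IsSeparable F K] (P : K → Prop) :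
    augCode F K P = affineCode F P := by
  have hB := traceForm_nondegenerate F K
  ext w
  exact (((Algebra.traceForm F K).toDual hB).surjective.exists
    (p := fun f => ∃ c, ∀ d : {x // P x}, w d = f d.1 + c)).symm

lemma mem_dualCode_affineCode_iff {P : V → Prop} [Fintype {x // P x}] {u : {x // P x} → F} :
    u ∈ dualCode (affineCode F P : Set ({x // P x} → F)) ↔
      ∑ d, u d = 0 ∧ ∑ d, u d • d.1 = 0 := by
  have pairing_eq {w : {x // P x} → F} {f : Module.Dual F V} {c : F} (hw : ∀ d, w d = f d.1 + c) :
      ∑ d, u d * w d = f (∑ d, u d • d.1) + (∑ d, u d) * c := by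
    simp only [hw, mul_add, Finset.sum_add_distrib, map_sum, map_smul, smul_eq_mul, Finset.sum_mul]
  constructor
  · intro hu
    refine ⟨?_, (Module.forall_dual_apply_eq_zero_iff F _).mp fun f => ?_⟩
    · simpa using hu 1 ⟨0, 1, by simp⟩
    · simpa using (pairing_eq (w := fun d => f d.1) (c := 0) (by simp)).symm.trans
        (hu _ ⟨f, 0, by simp⟩)
  · rintro ⟨sum_eq, sum_smul_eq⟩ w ⟨f, c, hw⟩
    rw [pairing_eq hw, sum_eq, sum_smul_eq, map_zero, zero_mul, add_zero]

lemma mem_dualCode_affineCode_iff_support [Fintype F] (hF : Fintype.card F = 2) {P : V → Prop}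
    [Fintype {x // P x}] {u : {x // P x} → F} :
    u ∈ dualCode (affineCode F P : Set ({x // P x} → F)) ↔
      Even (hammingNorm u) ∧ ∑ d ∈ binarySupport hF u, d.1 = 0 := by
  have := charP_two_of_card_eq_two hF
  have sum_eq : ∑ d, u d = (hammingNorm u : F) := by
    rw [hammingNorm, ← Finset.sum_boole]
    refine Finset.sum_congr rfl fun d _ => ?_
    rcases eq_zero_or_one_of_card_eq_two hF (u d) with hd | hd <;> simp [hd]
  have sum_smul_eq : ∑ d, u d • d.1 = ∑ d ∈ binarySupport hF u, d.1 := by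
    rw [binarySupport, Equiv.coe_fn_mk, Finset.sum_filter]
    refine Finset.sum_congr rfl fun d _ => ?_
    rcases eq_zero_or_one_of_card_eq_two hF (u d) with hd | hd <;> simp [hd]
  rw [mem_dualCode_affineCode_iff, sum_eq, sum_smul_eq, CharP.cast_eq_zero_iff F 2,
    even_iff_two_dvd]

end AffineCode

section ZeroSumQuadruples

variable {V : Type*} [AddCommGroup V] {P : V → Prop}

/-- The quadruples of points satisfying `P` that contain `i` and `j` and sum to zero. -/
def zeroSumQuadruples [Fintype {x // P x}] (i j : {x // P x}) : Finset (Finset {x // P x}) :=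
  {S | (S.card = 4 ∧ ∑ d ∈ S, d.1 = 0) ∧ i ∈ S ∧ j ∈ S}

lemma mem_zeroSumQuadruples [Fintype {x // P x}] {i j : {x // P x}} {S : Finset {x // P x}} :
    S ∈ zeroSumQuadruples i j ↔ (S.card = 4 ∧ ∑ d ∈ S, d.1 = 0) ∧ i ∈ S ∧ j ∈ S := by
  simp [zeroSumQuadruples]

variable [Module (ZMod 2) V] {i j k l : {x // P x}}

lemma add_eq_zero_iff_eq_of_zmodTwo {x y : V} : x + y = 0 ↔ x = y := by
  rw [← ZModModule.sub_eq_add, sub_eq_zero]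

lemma quadruple_mem_zeroSumQuadruples [Fintype {x // P x}] (hij : i ≠ j) (hki : k ≠ i)
    (hkj : k ≠ j) (hl : k.1 + (i.1 + j.1) = l.1) : {i, j, k, l} ∈ zeroSumQuadruples i j := by
  have hil : i ≠ l := fun h => hkj <| Subtype.ext <| add_eq_zero_iff_eq_of_zmodTwo.mp <| by
    simpa [← h, add_left_comm] using hl
  have hjl : j ≠ l := fun h => hki <| Subtype.ext <| add_eq_zero_iff_eq_of_zmodTwo.mp <| by
    simpa [← h, ← add_assoc] using hl
  have hkl : k ≠ l := fun h => hij <| Subtype.ext <| add_eq_zero_iff_eq_of_zmodTwo.mp <| by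
    simpa [← h] using hl
  refine mem_zeroSumQuadruples.mpr ⟨⟨?_, ?_⟩, by simp, by simp⟩
  · exact Finset.card_eq_four.mpr
      ⟨i, j, k, l, hij, hki.symm, hil, hkj.symm, hjl, hkl, rfl⟩
  · rw [Finset.sum_insert (by simp [hij, hki.symm, hil]),
      Finset.sum_insert (by simp [hkj.symm, hjl]), Finset.sum_pair hkl, ← hl,
      ← add_assoc k.1, ZModModule.add_self, zero_add, ← add_assoc, ZModModule.add_self]

lemma exists_eq_quadruple_of_mem_zeroSumQuadruples [Fintype {x // P x}] (hij : i ≠ j)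
    (hki : k ≠ i) (hkj : k ≠ j) {S : Finset {x // P x}} (hS : S ∈ zeroSumQuadruples i j)
    (hk : k ∈ S) : ∃ l : {x // P x}, k.1 + (i.1 + j.1) = l.1 ∧ S = {i, j, k, l} := by
  obtain ⟨⟨card_eq, sum_eq⟩, hi, hj⟩ := mem_zeroSumQuadruples.mp hS
  have subset : {i, j, k} ⊆ S := by simp [Finset.insert_subset_iff, hi, hj, hk]
  have card_triple : ({i, j, k} : Finset {x // P x}).card = 3 :=
    Finset.card_eq_three.mpr ⟨i, j, k, hij, hki.symm, hkj.symm, rfl⟩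
  obtain ⟨l, hl⟩ := Finset.card_eq_one.mp <|
    show (S \ {i, j, k}).card = 1 by rw [Finset.card_sdiff_of_subset subset]; omega
  have S_eq : S = {i, j, k, l} := by
    rw [← Finset.sdiff_union_of_subset subset, hl]
    grind
  refine ⟨l, add_eq_zero_iff_eq_of_zmodTwo.mp ?_, S_eq⟩
  rw [← sum_eq, ← Finset.sum_sdiff subset, hl, Finset.sum_singleton,
    Finset.sum_insert (by simp [hij, hki.symm]), Finset.sum_pair hkj.symm]
  abel

/-- Each zero-sum quadruple through `i` and `j` is counted by its two remaining points. -/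
lemma two_mul_card_zeroSumQuadruples [Fintype {x // P x}] (hij : i ≠ j) :
    2 * (zeroSumQuadruples i j).card =
      (Finset.univ.filter fun k : {x // P x} => P (k.1 + (i.1 + j.1))).card - 2 := by
  set E : Finset {x // P x} := {k | P (k.1 + (i.1 + j.1))} with hE
  have mem_E {k : {x // P x}} : k ∈ E ↔ P (k.1 + (i.1 + j.1)) := by simp [hE]
  have hi : P (i.1 + (i.1 + j.1)) := by rw [← add_assoc, ZModModule.add_self, zero_add]; exact j.2
  have hj : P (j.1 + (i.1 + j.1)) := by rw [add_left_comm, ZModModule.add_self, add_zero]; exact i.2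
  have pair_subset : {i, j} ⊆ E := by simp [Finset.insert_subset_iff, mem_E, hi, hj]
  rw [← Finset.card_pair hij, ← Finset.card_sdiff_of_subset pair_subset, mul_comm,
    ← mul_one (E \ _).card, Finset.card_pair hij]
  refine Finset.card_mul_eq_card_mul (fun S k => k ∈ S) (fun S hS => ?_) fun k hk => ?_
  · obtain ⟨⟨card_eq, -⟩, hi, hj⟩ := mem_zeroSumQuadruples.mp hS
    have above_eq : Finset.bipartiteAbove (fun S k => k ∈ S) (E \ {i, j}) S = S \ {i, j} := by
      ext k
      simp only [Finset.mem_bipartiteAbove, Finset.mem_sdiff, Finset.mem_insert,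
        Finset.mem_singleton, not_or]
      refine ⟨fun h => ⟨h.2, h.1.2⟩, fun ⟨hk, hki, hkj⟩ => ⟨⟨mem_E.mpr ?_, hki, hkj⟩, hk⟩⟩
      obtain ⟨l, hl, -⟩ := exists_eq_quadruple_of_mem_zeroSumQuadruples hij hki hkj hS hk
      exact hl ▸ l.2
    rw [above_eq, Finset.card_sdiff_of_subset (by simp [Finset.insert_subset_iff, hi, hj]),
      card_eq, Finset.card_pair hij]
  · simp only [Finset.mem_sdiff, mem_E, Finset.mem_insert, Finset.mem_singleton, not_or] at hk
    obtain ⟨hk, hki, hkj⟩ := hk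
    refine Finset.card_eq_one.mpr ⟨{i, j, k, ⟨_, hk⟩}, Finset.ext fun S => ?_⟩
    rw [Finset.mem_bipartiteBelow, Finset.mem_singleton]
    constructor
    · rintro ⟨hS, hkS⟩
      obtain ⟨l, hl, rfl⟩ := exists_eq_quadruple_of_mem_zeroSumQuadruples hij hki hkj hS hkS
      rw [show l = ⟨_, hk⟩ from Subtype.ext hl.symm]
    · rintro rfl
      exact ⟨quadruple_mem_zeroSumQuadruples hij hki hkj rfl, by simp⟩

end ZeroSumQuadruples

section EllipticQuadric

variable {F V : Type*} [Field F] [AddCommGroup V] [Module F V]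

/-- The word on the quadric `Q = 0` that evaluates `Q` on the translate of the quadric by `p.1` and
adds the constant `p.2`. -/
def translateWord (Q : QuadraticForm F V) (p : V × F) : {x // Q x = 0} → F :=
  fun d => Q (d.1 + p.1) + p.2

lemma translateWord_apply (Q : QuadraticForm F V) (p : V × F) (d : {x // Q x = 0}) :
    translateWord Q p d = QuadraticMap.polar Q d.1 p.1 + (Q p.1 + p.2) := by
  rw [translateWord, QuadraticMap.map_add Q, d.2]
  ring

lemma range_translateWord [FiniteDimensional F V] {Q : QuadraticForm F V}
    (hQ : LinearMap.BilinForm.Nondegenerate Q.polarBilin) :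
    Set.range (translateWord Q) = affineCode F fun x => Q x = 0 := by
  ext w
  constructor
  · rintro ⟨p, rfl⟩
    refine ⟨Q.polarBilin p.1, Q p.1 + p.2, fun d => ?_⟩
    rw [translateWord_apply, QuadraticMap.polar_comm]
    rfl
  · rintro ⟨f, c, hw⟩
    obtain ⟨a, rfl⟩ := (LinearMap.BilinForm.toDual Q.polarBilin hQ).surjective f
    refine ⟨(a, c - Q a), funext fun d => ?_⟩
    rw [translateWord_apply, hw, QuadraticMap.polar_comm, add_sub_cancel]
    rfl

variable [Fintype F] [Fintype V]

/-- A nonsingular quadratic form of minus type over a field with two elements; in dimension `2 * r`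
the parameter is `N = 2 ^ (r - 1)`. Among nonsingular forms the minus type is singled out by its
number of zeros. -/
structure IsElliptic (Q : QuadraticForm F V) (N : ℕ) : Prop where
  card_field : Fintype.card F = 2
  card_space : Fintype.card V = (2 * N) ^ 2
  nondegenerate : LinearMap.BilinForm.Nondegenerate Q.polarBilin
  card_zeros : Fintype.card {x // Q x = 0} = N * (2 * N - 1)

namespace IsElliptic

variable {Q : QuadraticForm F V} {N : ℕ}

lemma pos (h : IsElliptic Q N) : 0 < N := by
  have := h.card_space ▸ Fintype.card_pos (α := V)
  exact Nat.pos_of_ne_zero fun hN => by simp [hN] at this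

lemma card_zeros_int (h : IsElliptic Q N) :
    (Fintype.card {x // Q x = 0} : ℤ) = N * (2 * N - 1) := by
  have := h.pos
  rw [h.card_zeros]
  push_cast [show 1 ≤ 2 * N by omega]
  rfl

lemma sum_signChar (h : IsElliptic Q N) : ∑ x, signChar h.card_field (Q x) = -(2 * N : ℤ) := by
  have zeros_add := card_zeros_add_hammingNorm Q
  rw [h.card_space] at zeros_add
  zify at zeros_add
  rw [h.card_zeros_int] at zeros_add
  rw [sum_signChar_comp, h.card_space]
  push_cast
  linarith

/-- The factor `1 + χ (Q x)` is twice the indicator of the quadric, and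
`χ (Q x) * χ (Q (x + a)) = χ (Q a) * χ (polar Q x a)` sums to zero over `V`. -/
lemma sum_signChar_translateWord (h : IsElliptic Q N) {a : V} (ha : a ≠ 0) (c : F) :
    ∑ d, signChar h.card_field (translateWord Q (a, c) d) = -N * signChar h.card_field c := by
  set χ := signChar h.card_field with hχ
  have sum_polar : ∑ x, χ (Q.polarBilin x a) = 0 := by
    simp_rw [QuadraticMap.polarBilin_apply_apply, QuadraticMap.polar_comm _ _ a]
    refine sum_signChar_linearMap h.card_field (f := Q.polarBilin a) fun h0 => ha ?_
    exact h.nondegenerate.1 a fun y => DFunLike.congr_fun h0 y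
  have sum_translate : ∑ x, χ (Q (x + a)) = -(2 * N : ℤ) :=
    (Equiv.sum_comp (Equiv.addRight a) fun x => χ (Q x)).trans h.sum_signChar
  have mul_eq (x : V) : (1 + χ (Q x)) * χ (Q (x + a)) =
      χ (Q (x + a)) + χ (Q a) * χ (Q.polarBilin x a) := by
    have := signChar_mul_self h.card_field (Q x)
    simp only [QuadraticMap.map_add Q, AddChar.map_add_eq_mul, QuadraticMap.polarBilin_apply_apply]
    linear_combination (χ (Q a) * χ (QuadraticMap.polar Q x a)) * this
  have two_mul_sum : 2 * ∑ d : {x // Q x = 0}, χ (Q (d.1 + a)) = -(2 * N : ℤ) := calc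
    2 * ∑ d : {x // Q x = 0}, χ (Q (d.1 + a)) = ∑ x, (1 + χ (Q x)) * χ (Q (x + a)) := by
      rw [← Finset.sum_subtype (Finset.univ.filter fun x => Q x = 0) (by simp)
        (fun x => χ (Q (x + a))), Finset.sum_filter, Finset.mul_sum]
      refine Finset.sum_congr rfl fun x _ => ?_
      by_cases hx : Q x = 0 <;> simp [hχ, signChar_apply, hx]
    _ = -(2 * N : ℤ) := by
      simp_rw [mul_eq, Finset.sum_add_distrib, ← Finset.mul_sum, sum_polar, sum_translate]
      ring
  simp only [translateWord, AddChar.map_add_eq_mul, ← Finset.sum_mul]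
  rw [show ∑ d : {x // Q x = 0}, χ (Q (d.1 + a)) = -N by linarith]

lemma hammingNorm_translateWord (h : IsElliptic Q N) (a : V) (c : F) :
    hammingNorm (translateWord Q (a, c)) =
      if a = 0 then if c = 0 then 0 else N * (2 * N - 1)
      else if c = 0 then N ^ 2 else N * (N - 1) := by
  have hN := h.pos
  have two_mul_norm (ha : a ≠ 0) : 2 * (hammingNorm (translateWord Q (a, c)) : ℤ) =
      N * (2 * N - 1) + N * signChar h.card_field c := by
    have := h.sum_signChar_translateWord ha c
    rw [sum_signChar_comp, h.card_zeros_int] at this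
    linarith
  split_ifs with ha hc hc
  · exact hammingNorm_eq_zero.mpr <| funext fun d => by simp [translateWord, ha, hc, d.2]
  · rw [← h.card_zeros, hammingNorm, Finset.filter_true_of_mem, Finset.card_univ]
    intro d _
    simp [translateWord, ha, hc, d.2]
  · have := two_mul_norm ha
    rw [signChar_apply, if_pos hc] at this
    zify
    linarith
  · have := two_mul_norm ha
    rw [signChar_apply, if_neg hc] at this
    zify [hN]
    linarith

lemma hammingNorm_translateWord_eq_min_iff (h : IsElliptic Q N) (hN : 1 < N) (p : V × F) :
    hammingNorm (translateWord Q p) = N * (N - 1) ↔ p.1 ≠ 0 ∧ p.2 = 1 := by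
  obtain ⟨a, c⟩ := p
  have min_pos : 0 < N * (N - 1) := Nat.mul_pos h.pos (Nat.sub_pos_of_lt hN)
  have min_lt_sq : N * (N - 1) < N ^ 2 := by
    rw [sq]
    exact Nat.mul_lt_mul_of_pos_left (by omega) h.pos
  have min_lt_max : N * (N - 1) < N * (2 * N - 1) := Nat.mul_lt_mul_of_pos_left (by omega) h.pos
  rw [h.hammingNorm_translateWord]
  split_ifs with ha hc hc
  · exact iff_of_false min_pos.ne fun hp => hp.1 ha
  · exact iff_of_false min_lt_max.ne' fun hp => hp.1 ha
  · exact iff_of_false min_lt_sq.ne' fun hp => one_ne_zero (hp.2.symm.trans hc)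
  · exact iff_of_true rfl ⟨ha, (eq_zero_or_one_of_card_eq_two h.card_field c).resolve_left hc⟩

lemma min_le_hammingNorm_translateWord (h : IsElliptic Q N) {p : V × F} (hp : p ≠ 0) :
    N * (N - 1) ≤ hammingNorm (translateWord Q p) := by
  obtain ⟨a, c⟩ := p
  rw [h.hammingNorm_translateWord]
  split_ifs with ha hc hc
  · exact absurd (Prod.ext ha hc) hp
  · exact Nat.mul_le_mul_left N (by omega)
  · rw [sq]
    exact Nat.mul_le_mul_left N (by omega)
  · rfl

lemma translateWord_injective (h : IsElliptic Q N) (hN : 1 < N) :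
    Function.Injective (translateWord Q) := by
  rintro ⟨a, c⟩ ⟨b, e⟩ hab
  have const_eq : Q a + c = Q b + e := by
    simpa [translateWord] using congrFun hab ⟨0, QuadraticMap.map_zero Q⟩
  have sub_word_eq_zero : translateWord Q (a - b, -Q (a - b)) = 0 := by
    funext d
    have hd := congrFun hab d
    rw [translateWord_apply, translateWord_apply, const_eq, add_left_inj] at hd
    rw [translateWord_apply, add_neg_cancel, add_zero]
    exact (map_sub (Q.polarBilin d.1) a b).trans (sub_eq_zero.mpr hd)
  have diff_eq_zero : a - b = 0 := by
    by_contra hne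
    have := h.min_le_hammingNorm_translateWord (p := (a - b, -Q (a - b))) fun h0 =>
      hne (congrArg Prod.fst h0)
    rw [sub_word_eq_zero, hammingNorm_zero] at this
    exact (Nat.mul_pos h.pos (Nat.sub_pos_of_lt hN)).not_ge this
  obtain rfl := sub_eq_zero.mp diff_eq_zero
  rw [add_left_cancel const_eq]

lemma natCard_affineCode (h : IsElliptic Q N) (hN : 1 < N) :
    Nat.card (affineCode F fun x => Q x = 0 : Set ({x // Q x = 0} → F)) =
      2 ^ (Module.finrank F V + 1) := by
  rw [← range_translateWord h.nondegenerate,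
    Nat.card_range_of_injective (h.translateWord_injective hN), Nat.card_eq_fintype_card,
    Fintype.card_prod, Module.card_eq_pow_finrank (K := F) (V := V), h.card_field, pow_succ]

lemma finrank_affineCode (h : IsElliptic Q N) (hN : 1 < N) :
    Module.finrank F (affineCode F fun x => Q x = 0) = Module.finrank F V + 1 := by
  have card_eq : Nat.card (affineCode F fun x => Q x = 0) = 2 ^ (Module.finrank F V + 1) :=
    h.natCard_affineCode hN
  rw [Module.natCard_eq_pow_finrank (K := F), Nat.card_eq_fintype_card, h.card_field] at card_eq
  exact Nat.pow_right_injective le_rfl card_eq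

lemma natCard_dualCode_affineCode (h : IsElliptic Q N) (hN : 1 < N) :
    Nat.card (dualCode (affineCode F fun x => Q x = 0 : Set ({x // Q x = 0} → F))) =
      2 ^ (N * (2 * N - 1) - Module.finrank F V - 1) := by
  rw [natCard_dualCode, h.card_field, h.card_zeros, h.finrank_affineCode hN, Nat.sub_sub]

lemma map_hammingNorm_affineCode (h : IsElliptic Q N) (hN : 1 < N) :
    (affineCode F fun x => Q x = 0 : Set ({x // Q x = 0} → F)).toFinset.val.map
        (fun w => hammingNorm w) =
      Multiset.replicate 1 0 + Multiset.replicate ((2 * N) ^ 2 - 1) (N * (N - 1))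
        + Multiset.replicate ((2 * N) ^ 2 - 1) (N ^ 2)
        + Multiset.replicate 1 (N * (2 * N - 1)) := by
  have toFinset_eq : (affineCode F fun x => Q x = 0 : Set ({x // Q x = 0} → F)).toFinset =
      Finset.univ.map ⟨translateWord Q, h.translateWord_injective hN⟩ := by
    ext w
    rw [Set.mem_toFinset, ← range_translateWord h.nondegenerate]
    simp
  have univ_F : (Finset.univ : Finset F) = {0, 1} := by
    ext x
    simpa using eq_zero_or_one_of_card_eq_two h.card_field x
  have sum_of_ne {a : V} (ha : a ∈ ({0}ᶜ : Finset V)) :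
      ∑ c, ({hammingNorm (translateWord Q (a, c))} : Multiset ℕ) = {N ^ 2} + {N * (N - 1)} := by
    have ha : a ≠ 0 := by simpa using ha
    simp [univ_F, h.hammingNorm_translateWord, ha]
  have sum_of_zero : ∑ c, ({hammingNorm (translateWord Q (0, c))} : Multiset ℕ) =
      {0} + {N * (2 * N - 1)} := by
    simp [univ_F, h.hammingNorm_translateWord]
  calc
    _ = ∑ p : V × F, ({hammingNorm (translateWord Q p)} : Multiset ℕ) := by
      rw [toFinset_eq, Finset.map_val, Multiset.map_map, ← Multiset.sum_map_singleton (.map _ _),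
        Multiset.map_map]
      rfl
    _ = {0} + {N * (2 * N - 1)} + ((2 * N) ^ 2 - 1) • ({N ^ 2} + {N * (N - 1)}) := by
      rw [Fintype.sum_prod_type, Fintype.sum_eq_add_sum_compl 0, sum_of_zero,
        Finset.sum_congr rfl fun a => sum_of_ne, Finset.sum_const, Finset.card_compl,
        Finset.card_singleton, h.card_space]
    _ = _ := by
      rw [nsmul_add, Multiset.nsmul_singleton, Multiset.nsmul_singleton, Multiset.replicate_one,
        Multiset.replicate_one]
      abel

lemma isMinDist_affineCode (h : IsElliptic Q N) (hN : 1 < N) :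
    IsMinDist (affineCode F fun x => Q x = 0 : Set ({x // Q x = 0} → F)) (N * (N - 1)) := by
  rw [← range_translateWord h.nondegenerate]
  have zero_word : translateWord Q 0 = 0 := funext fun d => by simp [translateWord, d.2]
  constructor
  · obtain ⟨a, ha⟩ : ∃ a : V, a ≠ 0 := by
      refine Fintype.exists_ne_of_one_lt_card ?_ 0
      rw [h.card_space]
      nlinarith
    have norm_eq := (h.hammingNorm_translateWord_eq_min_iff hN (a, 1)).mpr ⟨ha, rfl⟩
    refine ⟨_, ⟨(a, 1), rfl⟩, hammingNorm_ne_zero_iff.mp ?_, norm_eq⟩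
    rw [norm_eq]
    exact (Nat.mul_pos h.pos (Nat.sub_pos_of_lt hN)).ne'
  · rintro _ ⟨p, rfl⟩ hp
    exact h.min_le_hammingNorm_translateWord fun h0 => hp (h0 ▸ zero_word)

lemma translateWord_one_ne_zero_iff (h : IsElliptic Q N) {a : V} {d : {x // Q x = 0}} :
    translateWord Q (a, 1) d ≠ 0 ↔ Q (d.1 + a) = 0 :=
  add_one_ne_zero_iff_of_card_eq_two h.card_field _

lemma card_filter_translate (h : IsElliptic Q N) {a : V} (ha : a ≠ 0) :
    (Finset.univ.filter fun d : {x // Q x = 0} => Q (d.1 + a) = 0).card = N * (N - 1) := by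
  have norm_eq := h.hammingNorm_translateWord a 1
  rw [if_neg ha, if_neg one_ne_zero] at norm_eq
  simpa only [hammingNorm, h.translateWord_one_ne_zero_iff] using norm_eq

lemma holds2Design_affineCode (h : IsElliptic Q N) (hN : 1 < N) :
    Holds2Design (affineCode F fun x => Q x = 0 : Set ({x // Q x = 0} → F))
      (N * (N - 1)) (N ^ 2 - N - 1) := by
  rw [holds2Design_iff_card_words h.card_field]
  intro i j hij
  have hji : j.1 - i.1 ≠ 0 := sub_ne_zero.mpr fun hji => hij (Subtype.ext hji.symm)
  have hi : i ∈ Finset.univ.filter fun d : {x // Q x = 0} => Q (d.1 + (j.1 - i.1)) = 0 := by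
    simp [j.2]
  have word_injective : Function.Injective fun d : {x // Q x = 0} =>
      translateWord Q (d.1 - i.1, 1) := fun d e hde => Subtype.ext <| sub_left_injective <|
    congrArg Prod.fst (h.translateWord_injective hN hde)
  have card_eq : (((Finset.univ.filter fun d : {x // Q x = 0} =>
      Q (d.1 + (j.1 - i.1)) = 0).erase i).image fun d => translateWord Q (d.1 - i.1, 1)).card =
      N ^ 2 - N - 1 := by
    rw [sq, ← Nat.mul_sub_one, Finset.card_image_of_injective _ word_injective,
      Finset.card_erase_of_mem hi, h.card_filter_translate hji]
  refine (congrArg Finset.card (Finset.ext fun u => ?_)).trans card_eq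
  simp only [Finset.mem_filter, Finset.mem_univ, true_and, Finset.mem_image, Finset.mem_erase,
    ← range_translateWord h.nondegenerate]
  constructor
  · rintro ⟨⟨⟨a, c⟩, rfl⟩, hnorm, hui, huj⟩
    obtain ⟨ha, rfl⟩ := (h.hammingNorm_translateWord_eq_min_iff hN _).mp hnorm
    rw [h.translateWord_one_ne_zero_iff] at hui huj
    refine ⟨⟨i.1 + a, hui⟩, ⟨fun hia => ha ?_, ?_⟩, ?_⟩
    · simpa using congrArg Subtype.val hia
    · rwa [show i.1 + a + (j.1 - i.1) = j.1 + a by abel]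
    · rw [add_sub_cancel_left]
  · rintro ⟨d, ⟨hdi, hd⟩, rfl⟩
    refine ⟨⟨_, rfl⟩, ?_, ?_, ?_⟩
    · exact (h.hammingNorm_translateWord_eq_min_iff hN _).mpr
        ⟨sub_ne_zero.mpr fun hdi' => hdi (Subtype.ext hdi'), rfl⟩
    · rw [h.translateWord_one_ne_zero_iff, add_sub_cancel]
      exact d.2
    · rwa [h.translateWord_one_ne_zero_iff, show j.1 + (d.1 - i.1) = d.1 + (j.1 - i.1) by abel]

lemma card_zeroSumQuadruples (h : IsElliptic Q N) {i j : {x // Q x = 0}} (hij : i ≠ j) :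
    (zeroSumQuadruples i j).card = N.choose 2 - 1 := by
  have := zmodTwoModule h.card_field V
  have hadd : i.1 + j.1 ≠ 0 := fun h0 => hij (Subtype.ext (add_eq_zero_iff_eq_of_zmodTwo.mp h0))
  have two_mul_card := two_mul_card_zeroSumQuadruples hij
  rw [h.card_filter_translate hadd] at two_mul_card
  rw [Nat.choose_two_right]
  omega

lemma holds2Design_dualCode_affineCode (h : IsElliptic Q N) :
    Holds2Design (dualCode (affineCode F fun x => Q x = 0 : Set ({x // Q x = 0} → F)))
      4 (N.choose 2 - 1) := by
  rw [holds2Design_iff_card_words h.card_field]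
  intro i j hij
  rw [← h.card_zeroSumQuadruples hij]
  refine Finset.card_equiv (binarySupport h.card_field) fun u => ?_
  rw [mem_zeroSumQuadruples, card_binarySupport, mem_binarySupport, mem_binarySupport,
    Finset.mem_filter, mem_dualCode_affineCode_iff_support h.card_field]
  simp only [Finset.mem_univ, true_and, ← and_assoc]
  refine and_congr_left' (and_congr_left' ?_)
  constructor
  · rintro ⟨⟨-, sum_eq⟩, norm_eq⟩
    exact ⟨norm_eq, sum_eq⟩
  · rintro ⟨norm_eq, sum_eq⟩
    exact ⟨⟨norm_eq ▸ by decide, sum_eq⟩, norm_eq⟩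

lemma isMinDist_dualCode_affineCode (h : IsElliptic Q N) (hN : 2 < N) :
    IsMinDist (dualCode (affineCode F fun x => Q x = 0 : Set ({x // Q x = 0} → F))) 4 := by
  constructor
  · have card_pos : 1 < Fintype.card {x // Q x = 0} := by
      rw [h.card_zeros]
      exact one_lt_mul_of_lt_of_le (by omega) (by omega)
    obtain ⟨i, j, hij⟩ := Fintype.exists_pair_of_one_lt_card card_pos
    have three_le : (3).choose 2 ≤ N.choose 2 := Nat.choose_le_choose 2 hN
    obtain ⟨S, hS⟩ : (zeroSumQuadruples i j).Nonempty := Finset.card_pos.mp <| by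
      rw [h.card_zeroSumQuadruples hij]
      exact Nat.sub_pos_of_lt (three_le.trans_lt' (by decide))
    obtain ⟨⟨card_eq, sum_eq⟩, -, -⟩ := mem_zeroSumQuadruples.mp hS
    obtain ⟨u, rfl⟩ := (binarySupport h.card_field).surjective S
    rw [card_binarySupport] at card_eq
    refine ⟨u, ?_, hammingNorm_ne_zero_iff.mp (by omega), card_eq⟩
    exact (mem_dualCode_affineCode_iff_support h.card_field).mpr ⟨card_eq ▸ by decide, sum_eq⟩
  · intro u hu hu0
    obtain ⟨⟨t, ht⟩, sum_eq⟩ := (mem_dualCode_affineCode_iff_support h.card_field).mp hu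
    have norm_ne_two : hammingNorm u ≠ 2 := fun norm_eq => by
      have := zmodTwoModule h.card_field V
      rw [← card_binarySupport h.card_field, Finset.card_eq_two] at norm_eq
      obtain ⟨i, j, hij, support_eq⟩ := norm_eq
      rw [support_eq, Finset.sum_pair hij, add_eq_zero_iff_eq_of_zmodTwo] at sum_eq
      exact hij (Subtype.ext sum_eq)
    have := hammingNorm_pos_iff.mpr hu0
    omega

end IsElliptic

end EllipticQuadric

section TraceNormForm

lemma card_nsmul_sum_comp_of_surjective {G H M : Type*} [Group G] [Group H] [Fintype G]
    [Fintype H] [AddCommMonoid M] {f : G →* H} (hf : Function.Surjective f) (φ : H → M) :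
    Fintype.card H • ∑ x, φ (f x) = Fintype.card G • ∑ y, φ y := calc
  Fintype.card H • ∑ x, φ (f x) = ∑ _y : H, ∑ x, φ (f x) := by
    rw [Finset.sum_const, Finset.card_univ]
  _ = ∑ y, ∑ x, φ (f x * y) := Finset.sum_congr rfl fun y _ => by
    obtain ⟨g, rfl⟩ := hf y
    simpa only [map_mul, Equiv.coe_mulRight] using
      (Equiv.sum_comp (Equiv.mulRight g) fun x => φ (f x)).symm
  _ = ∑ x, ∑ y, φ (f x * y) := Finset.sum_comm
  _ = ∑ _x : G, ∑ y, φ y :=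
    Finset.sum_congr rfl fun x _ => Equiv.sum_comp (Equiv.mulLeft (f x)) φ
  _ = Fintype.card G • ∑ y, φ y := by rw [Finset.sum_const, Finset.card_univ]

lemma sum_eq_add_sum_units {K M : Type*} [GroupWithZero K] [Fintype K] [AddCommMonoid M]
    (φ : K → M) : ∑ x, φ x = φ 0 + ∑ u : Kˣ, φ u := by
  rw [Fintype.sum_eq_add_sum_subtype_ne φ 0]
  exact congrArg _ (Equiv.sum_comp unitsEquivNeZero fun x : {x : K // x ≠ 0} => φ x.1).symm

variable (F K L : Type*) [Field F] [Field K] [Field L] [Fintype K]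
  [Algebra F K] [Algebra K L] [Algebra F L] [IsScalarTower F K L]
  [Algebra.IsQuadraticExtension K L]

lemma card_quadraticExtension [Fintype L] : Fintype.card L = Fintype.card K ^ 2 := by
  rw [Module.card_eq_pow_finrank (K := K), Algebra.IsQuadraticExtension.finrank_eq_two K L]

lemma sum_addChar_norm [Fintype L] {R : Type*} [CommRing R] [IsDomain R] [CharZero R]
    {ψ : AddChar K R} (hψ : ψ ≠ 1) : ∑ x : L, ψ (Algebra.norm K x) = -Fintype.card K := by
  have sum_units : ∑ y : Kˣ, ψ y = -1 := by
    have := sum_eq_add_sum_units ψ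
    rw [AddChar.sum_eq_zero_of_ne_one hψ, AddChar.map_zero_eq_one] at this
    linear_combination -this
  have norm_units := card_nsmul_sum_comp_of_surjective
    (FiniteField.unitsMap_norm_surjective K L) fun y : Kˣ => ψ y
  have one_lt := Fintype.one_lt_card (α := K)
  rw [sum_units, Fintype.card_units, Fintype.card_units, card_quadraticExtension K L, nsmul_eq_mul,
    nsmul_eq_mul, Nat.cast_pred (by omega), Nat.cast_pred (by positivity)] at norm_units
  have card_sub_one_ne_zero : (Fintype.card K : R) - 1 ≠ 0 :=
    sub_ne_zero.mpr (Nat.cast_ne_one.mpr one_lt.ne')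
  rw [sum_eq_add_sum_units, Algebra.norm_zero, AddChar.map_zero_eq_one]
  refine mul_left_cancel₀ card_sub_one_ne_zero ?_
  simp only [Units.coe_map] at norm_units
  push_cast at norm_units
  linear_combination norm_units

section Finite

variable [Finite L]

lemma algebraMap_norm_quadraticExtension (x : L) :
    algebraMap K L (Algebra.norm K x) = x ^ (Fintype.card K + 1) := by
  rw [FiniteField.algebraMap_norm_eq_pow_sum, Algebra.IsQuadraticExtension.finrank_eq_two K L,
    Nat.card_eq_fintype_card, Finset.sum_range_succ, Finset.sum_range_one, pow_zero, pow_one,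
    add_comm]

lemma algebraMap_trace_quadraticExtension (x : L) :
    algebraMap K L (Algebra.trace K L x) = x + x ^ Fintype.card K := by
  rw [FiniteField.algebraMap_trace_eq_sum_pow, Algebra.IsQuadraticExtension.finrank_eq_two K L,
    Nat.card_eq_fintype_card, Finset.sum_range_succ, Finset.sum_range_one, pow_zero, pow_one,
    pow_one]

lemma norm_add_quadraticExtension (x y : L) :
    Algebra.norm K (x + y) = Algebra.norm K x + Algebra.norm K y +
      Algebra.trace K L (FiniteField.frobeniusAlgHom K L x * y) := by
  apply (algebraMap K L).injective
  set σ := FiniteField.frobeniusAlgHom K L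
  have norm_eq (z : L) : algebraMap K L (Algebra.norm K z) = σ z * z := by
    rw [algebraMap_norm_quadraticExtension, pow_succ, FiniteField.frobeniusAlgHom_apply]
  have trace_eq (z : L) : algebraMap K L (Algebra.trace K L z) = z + σ z := by
    rw [algebraMap_trace_quadraticExtension, FiniteField.frobeniusAlgHom_apply]
  have σ_σ : σ (σ x) = x := by
    have := Fintype.ofFinite L
    rw [FiniteField.frobeniusAlgHom_apply, FiniteField.frobeniusAlgHom_apply, ← pow_mul, ← sq,
      ← card_quadraticExtension K L, FiniteField.pow_card]
  simp only [map_add, norm_eq, trace_eq, map_mul, σ_σ]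
  ring

lemma polar_trace_norm (x y : L) :
    QuadraticMap.polar (fun z : L => Algebra.trace F K (Algebra.norm K z)) x y =
      Algebra.trace F L (FiniteField.frobeniusAlgHom K L x * y) := by
  have : FiniteDimensional F K := .of_finite
  rw [QuadraticMap.polar, norm_add_quadraticExtension, map_add, map_add, Algebra.trace_trace]
  ring

/-- The quadratic form `Tr_{K/F}(N_{L/K}(x))` on a quadratic extension `L / K` of finite fields. -/
def traceNormForm : QuadraticForm F L :=
  QuadraticMap.ofPolar (fun x => Algebra.trace F K (Algebra.norm K x))
    (fun a x => by
      rw [← algebraMap_smul K, Algebra.smul_def, map_mul, Algebra.norm_algebraMap,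
        Algebra.IsQuadraticExtension.finrank_eq_two, ← map_pow, ← Algebra.smul_def, map_smul, sq])
    (fun x x' y => by simp only [polar_trace_norm, map_add, add_mul])
    (fun a x y => by
      rw [polar_trace_norm, polar_trace_norm, ← algebraMap_smul K, map_smul, algebraMap_smul,
        smul_mul_assoc, map_smul])

lemma polarBilin_traceNormForm_nondegenerate :
    LinearMap.BilinForm.Nondegenerate (traceNormForm F K L).polarBilin := by
  have : Finite F := .of_injective _ (algebraMap F K).injective
  have : FiniteDimensional F L := .of_finite
  have isRefl : (traceNormForm F K L).polarBilin.IsRefl := fun x y h => by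
    rwa [QuadraticMap.polarBilin_apply_apply, QuadraticMap.polar_comm]
  refine isRefl.nondegenerate_iff_separatingLeft.mpr fun x hx => ?_
  refine (map_eq_zero (FiniteField.frobeniusAlgHom K L)).mp ?_
  exact (traceForm_nondegenerate F L).1 _ fun y => (polar_trace_norm F K L x y).symm.trans (hx y)

end Finite

lemma isElliptic_traceNormForm [Fintype F] [Fintype L] {N : ℕ} (hF : Fintype.card F = 2)
    (hK : Fintype.card K = 2 * N) : IsElliptic (traceNormForm F K L) N where
  card_field := hF
  card_space := by rw [card_quadraticExtension K L, hK]
  nondegenerate := polarBilin_traceNormForm_nondegenerate F K L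
  card_zeros := by
    have : FiniteDimensional F K := .of_finite
    have hN : 1 ≤ 2 * N := hK ▸ Fintype.card_pos
    let ψ : AddChar K ℤ := (signChar hF).compAddMonoidHom (Algebra.trace F K).toAddMonoidHom
    have ψ_ne_one : ψ ≠ 1 := fun h => by
      obtain ⟨x, hx⟩ := Algebra.trace_surjective F K 1
      have : signChar hF (Algebra.trace F K x) = 1 := DFunLike.congr_fun h x
      rw [hx, signChar_apply, if_neg one_ne_zero] at this
      norm_num at this
    have sum_eq := (sum_signChar_comp hF (traceNormForm F K L)).symm.trans
      (sum_addChar_norm K L ψ_ne_one)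
    have zeros_add := card_zeros_add_hammingNorm (traceNormForm F K L)
    rw [card_quadraticExtension K L, hK] at sum_eq zeros_add
    zify [hN] at zeros_add sum_eq ⊢
    linarith

end TraceNormForm

lemma finrank_eq_of_card_eq_pow {K V : Type*} [DivisionRing K] [AddCommGroup V] [Module K V]
    [Fintype K] [Fintype V] {d : ℕ} (h : Fintype.card V = Fintype.card K ^ d) :
    Module.finrank K V = d :=
  Nat.pow_right_injective Fintype.one_lt_card <| (Module.card_eq_pow_finrank (K := K)).symm.trans h

lemma two_pow_sub_one_choose_two {r : ℕ} (hr : 2 ≤ r) :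
    (2 ^ (r - 1)).choose 2 = 2 ^ (2 * r - 3) - 2 ^ (r - 2) := by
  obtain ⟨k, rfl⟩ := Nat.exists_eq_add_of_le' hr
  rw [show k + 2 - 1 = k + 1 by omega, show 2 * (k + 2) - 3 = 2 * k + 1 by omega,
    Nat.add_sub_cancel, Nat.choose_two_right, pow_succ, mul_right_comm,
    Nat.mul_div_cancel _ two_pos, Nat.mul_sub_one]
  congr 1
  ring

theorem stmt7 (r m n : ℕ) (hr : 3 ≤ r) (hm : m = 2 * r)
    (hn : n = 2 ^ (r - 1) * (2 ^ r - 1))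
    (Fq Fr Fm : Type) [Field Fq] [Field Fr] [Field Fm]
    [Fintype Fq] [Fintype Fr] [Fintype Fm]
    [Algebra Fq Fr] [Algebra Fr Fm] [Algebra Fq Fm] [IsScalarTower Fq Fr Fm]
    (hcq : Fintype.card Fq = 2) (hcr : Fintype.card Fr = 2 ^ r)
    (hcm : Fintype.card Fm = 2 ^ m)
    (g : Fm → Fr) (hg : ∀ x : Fm, algebraMap Fr Fm (g x) = x ^ (2 ^ r + 1))
    (C : Set ({x : Fm // Algebra.trace Fq Fr (g x) = 0} → Fq))
    (hC : C = augCode Fq Fm (fun x => Algebra.trace Fq Fr (g x) = 0)) :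
    -- length
    Fintype.card {x : Fm // Algebra.trace Fq Fr (g x) = 0} = n ∧
    -- dimension `m + 1`
    Nat.card C = 2 ^ (m + 1) ∧
    -- minimum distance
    IsMinDist C (2 ^ (r - 1) * (2 ^ (r - 1) - 1)) ∧
    -- weight enumerator
    (C.toFinset.val.map fun c => hammingNorm c)
      = Multiset.replicate 1 0
        + Multiset.replicate (2 ^ (2 * r) - 1) (2 ^ (r - 1) * (2 ^ (r - 1) - 1))
        + Multiset.replicate (2 ^ (2 * r) - 1) (2 ^ (2 * r - 2))
        + Multiset.replicate 1 (2 ^ (r - 1) * (2 ^ r - 1)) ∧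
    -- the dual code has dimension `n - m - 1` and minimum distance `4`
    Nat.card (dualCode C) = 2 ^ (n - m - 1) ∧
    IsMinDist (dualCode C) 4 ∧
    -- the minimum weight codewords hold a 2-design
    Holds2Design C (2 ^ (r - 1) * (2 ^ (r - 1) - 1)) (2 ^ (2 * r - 2) - 2 ^ (r - 1) - 1) ∧
    -- the minimum weight codewords of the dual hold a 2-design
    Holds2Design (dualCode C) 4 (2 ^ (2 * r - 3) - 2 ^ (r - 2) - 1) := by
  have finrank_r : Module.finrank Fr Fm = 2 := finrank_eq_of_card_eq_pow <| by
    rw [hcm, hcr, hm, pow_mul']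
  have finrank_q : Module.finrank Fq Fm = m := finrank_eq_of_card_eq_pow <| by rw [hcm, hcq]
  have : Algebra.IsQuadraticExtension Fr Fm := { finrank_eq_two' := finrank_r }
  obtain rfl : g = Algebra.norm Fr := funext fun x => (algebraMap Fr Fm).injective <| by
    rw [hg, algebraMap_norm_quadraticExtension, hcr]
  obtain rfl := hC.trans (augCode_eq_affineCode _)
  have two_mul_pow : 2 * 2 ^ (r - 1) = 2 ^ r := mul_pow_sub_one (by omega) 2
  have sq_pow : (2 ^ (r - 1)) ^ 2 = 2 ^ (2 * r - 2) := by rw [← pow_mul', Nat.mul_sub_one]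
  have two_lt : 2 < 2 ^ (r - 1) := lt_self_pow₀ one_lt_two (by omega)
  have one_lt := one_lt_two.trans two_lt
  have h : IsElliptic (traceNormForm Fq Fr Fm) (2 ^ (r - 1)) :=
    isElliptic_traceNormForm Fq Fr Fm hcq (hcr.trans two_mul_pow.symm)
  rw [hn, ← finrank_q, pow_mul' 2 2 r, ← two_mul_pow, ← sq_pow,
    ← two_pow_sub_one_choose_two (by omega)]
  exact ⟨h.card_zeros, h.natCard_affineCode one_lt, h.isMinDist_affineCode one_lt,
    h.map_hammingNorm_affineCode one_lt, h.natCard_dualCode_affineCode one_lt,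
    h.isMinDist_dualCode_affineCode two_lt, h.holds2Design_affineCode one_lt,
    h.holds2Design_dualCode_affineCode⟩
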